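/- arXiv:math-ph/0308037 — 2 statements merged into one kernel-verified Lean document; each statement's English description precedes it below -/
import Mathlib

section
/- Let ρ be a faithful density operator on a separable Hilbert space H, and let σ be any state in the Araki neighbourhood of ρ: σ = ρ_X = exp(−(H₀+X)) where ρ = exp(−H₀) and X is a bounded operator satisfying the Araki condition for ρ (equivalently, σ is nearby ρ). Then the relative entropy S(ρ|σ) = Tr ρ(log ρ − log σ) is finite; indeed S(ρ|σ) = Tr(ρX), so |S(ρ|σ)| ≤ ‖X‖ · Tr ρ ≤ ‖X‖_A · Tr ρ. -/
open scoped InnerProductSpace ENNReal NNReal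
open MeasureTheory Metric Filter

noncomputable section

variable {H : Type*} [NormedAddCommGroup H] [InnerProductSpace ℂ H] [CompleteSpace H]
  [TopologicalSpace.SeparableSpace H]

/-- The real power `ρ ^ t` (for `t ≥ 0`) of a positive operator `ρ`, via the continuous
functional calculus. -/
def opow (ρ : H →L[ℂ] H) (t : ℝ) : H →L[ℂ] H := cfc (fun x : ℝ => x ^ t) ρ

/-- The (real) trace of an operator, computed along the Hilbert basis `b`. -/
def trElem {ι : Type*} (b : HilbertBasis ι ℂ H) (T : H →L[ℂ] H) : ℝ :=
  ∑' i, (⟪b i, T (b i)⟫_ℂ).re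

/-- `ρ` is a finite faithful weight: a positive, injective, trace-class operator
(trace-class being witnessed by summability of the diagonal in the Hilbert basis `b`). -/
def IsFiniteWeight {ι : Type*} (b : HilbertBasis ι ℂ H) (ρ : H →L[ℂ] H) : Prop :=
  0 ≤ ρ ∧ Function.Injective (⇑ρ) ∧ Summable (fun i => (⟪b i, ρ (b i)⟫_ℂ).re)

/-- `σ` is nearby `ρ`: there is `C > 1` with `C⁻¹ ρ ≤ σ ≤ C ρ` in the Loewner order. -/
def IsNearby (σ ρ : H →L[ℂ] H) : Prop :=
  ∃ C : ℝ, 1 < C ∧ C⁻¹ • ρ ≤ σ ∧ σ ≤ C • ρ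

/-- `F` is the Araki family `t ↦ ρ^t X ρ^{-t}` of `X` relative to `ρ`: a bounded holomorphic
`B(H)`-valued extension to the disc `|t| < 1/2` of `t ↦ ρ^t X ρ^{-t}`, the latter being
expressed by `F t * ρ^t = ρ^t * X` and `ρ^t * F (-t) = X * ρ^t` for real `0 ≤ t < 1/2`. -/
def IsArakiFamily (ρ X : H →L[ℂ] H) (F : ℂ → H →L[ℂ] H) : Prop :=
  DifferentiableOn ℂ F (ball (0:ℂ) (1/2)) ∧
  (∃ M : ℝ, ∀ t ∈ ball (0:ℂ) (1/2), ‖F t‖ ≤ M) ∧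
  (∀ t : ℝ, 0 ≤ t → t < 1/2 → F (t:ℂ) * opow ρ t = opow ρ t * X) ∧
  (∀ t : ℝ, 0 ≤ t → t < 1/2 → opow ρ t * F (-(t:ℂ)) = X * opow ρ t)

/-- `X` satisfies the Araki condition for `ρ`. -/
def SatisfiesAraki (ρ X : H →L[ℂ] H) : Prop := ∃ F, IsArakiFamily ρ X F

/-- The Araki norm `‖X‖_A = sup_{|t| < 1/2} ‖ρ^t X ρ^{-t}‖`. -/
def arakiNorm (ρ X : H →L[ℂ] H) : ℝ :=
  sInf {M : ℝ | 0 ≤ M ∧ ∃ F, IsArakiFamily ρ X F ∧ ∀ t ∈ ball (0:ℂ) (1/2), ‖F t‖ ≤ M}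

/-- `σ = exp (-(H₀ + X))` where `ρ = exp (-H₀)`: the semigroup `t ↦ σ^t` is the mild
(Duhamel) solution of the semigroup `t ↦ ρ^t` perturbed by the bounded operator `-X`,
i.e. `σ^t = ρ^t - ∫_0^t ρ^{t-s} X σ^s ds` for all `t ≥ 0`. -/
def IsExpPerturbed (ρ σ X : H →L[ℂ] H) : Prop :=
  ∀ t : ℝ, 0 ≤ t →
    opow σ t = opow ρ t - ∫ s in (0:ℝ)..t, opow ρ (t - s) * X * opow σ s

/-- The truncation `x ↦ -log (x + e^{-n})` of `-log`; it increases pointwise to `-log x`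
as `n → ∞` and is operator anti-monotone. -/
def negLogTrunc (n : ℕ) (x : ℝ) : ℝ := - Real.log (x + Real.exp (-(n:ℝ)))

/-- The regularised quadratic form `⟪ξ, (-log (ρ + e^{-n})) ξ⟫` of `H₀ = -log ρ`. -/
def negLogFormSeq (ρ : H →L[ℂ] H) (ξ : H) (n : ℕ) : ℝ :=
  (⟪ξ, (cfc (negLogTrunc n) ρ) ξ⟫_ℂ).re

/-- `ξ` lies in the form domain `Q(H₀) = Dom (H₀^{1/2})` of `H₀ = -log ρ`. -/
def InFormDomain (ρ : H →L[ℂ] H) (ξ : H) : Prop :=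
  BddAbove (Set.range (negLogFormSeq ρ ξ))

/-- The value `⟪ξ, H₀ ξ⟫` of the quadratic form of `H₀ = -log ρ` (a monotone limit). -/
def negLogForm (ρ : H →L[ℂ] H) (ξ : H) : ℝ := ⨆ n, negLogFormSeq ρ ξ n

/-- The regularised quadratic form `⟪ξ, (σ + e^{-n})⁻¹ ξ⟫` of `σ⁻¹`. -/
def invFormSeq (σ : H →L[ℂ] H) (ξ : H) (n : ℕ) : ℝ :=
  (⟪ξ, (cfc (fun x : ℝ => (x + Real.exp (-(n:ℝ)))⁻¹) σ) ξ⟫_ℂ).re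

/-- The quadratic form `⟪ξ, σ⁻¹ ξ⟫ ∈ [0, ∞]` of the (possibly unbounded) inverse `σ⁻¹`
of the injective positive operator `σ`, as a monotone limit of regularisations. -/
def invForm (σ : H →L[ℂ] H) (ξ : H) : ℝ≥0∞ :=
  ⨆ n : ℕ, ENNReal.ofReal (invFormSeq σ ξ n)

/-- `S` is the relative entropy `S(ρ|σ) = Tr (ρ (log ρ - log σ))`, obtained as the limit of
the regularised quantities `Tr (ρ (log (ρ + e^{-n}) - log (σ + e^{-n})))`. -/
def IsRelativeEntropy {ι : Type*} (b : HilbertBasis ι ℂ H) (ρ σ : H →L[ℂ] H) (S : ℝ) : Prop :=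
  Tendsto (fun n : ℕ => trElem b (ρ * (cfc (negLogTrunc n) σ - cfc (negLogTrunc n) ρ)))
    atTop (nhds S)

/-- The `n`-th term of the Matsubara (Dyson/expansional) series: the integral over the
ordered simplex `0 ≤ s₁ ≤ ⋯ ≤ sₙ ≤ 1` (of volume `1/n!`) of the product
`F(s₁ - 1/2) ⋯ F(sₙ - 1/2)`, where `F t = ρ^t X ρ^{-t}`. -/
def matsubaraTerm (F : ℂ → H →L[ℂ] H) (n : ℕ) : H →L[ℂ] H :=
  ∫ s in {s : Fin n → ℝ | (∀ i, s i ∈ Set.Icc (0:ℝ) 1) ∧ Monotone s},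
    (List.ofFn fun i => F (((s i - 1/2 : ℝ) : ℂ))).prod

section Helpers

universe u

variable {H : Type*} [NormedAddCommGroup H] [InnerProductSpace ℂ H] [CompleteSpace H]

theorem aux_parseval {ι : Type*} (b : HilbertBasis ι ℂ H) (v : H) :
    HasSum (fun i => ‖⟪b i, v⟫_ℂ‖ ^ 2) (‖v‖ ^ 2) := by
  have h := b.hasSum_inner_mul_inner v v
  have h2 := Complex.hasSum_re h
  have e1 : (⟪v, v⟫_ℂ).re = ‖v‖ ^ 2 := by
    rw [inner_self_eq_norm_sq_to_K]; norm_cast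
  rw [e1] at h2
  have e2 : (fun i => ‖⟪b i, v⟫_ℂ‖ ^ 2) = fun i => (⟪v, b i⟫_ℂ * ⟪b i, v⟫_ℂ).re := by
    funext i
    rw [← inner_conj_symm v (b i), ← Complex.normSq_eq_conj_mul_self, Complex.ofReal_re,
      Complex.normSq_eq_norm_sq]
  rw [e2]
  exact h2

theorem aux_summable_mul {ι : Type*} (b : HilbertBasis ι ℂ H) (v w : H) :
    Summable (fun i => ‖⟪b i, v⟫_ℂ‖ * ‖⟪b i, w⟫_ℂ‖) ∧
    ∑' i, ‖⟪b i, v⟫_ℂ‖ * ‖⟪b i, w⟫_ℂ‖ ≤ ‖v‖ * ‖w‖ := by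
  have hv := aux_parseval b v
  have hw := aux_parseval b w
  have := Real.summable_and_inner_le_Lp_mul_Lq_tsum_of_nonneg (p := 2) (q := 2)
    (f := fun i => ‖⟪b i, v⟫_ℂ‖) (g := fun i => ‖⟪b i, w⟫_ℂ‖) (by
      constructor <;> norm_num) (fun _ => norm_nonneg _) (fun _ => norm_nonneg _)
      (by simpa using hv.summable) (by simpa using hw.summable)
  refine ⟨this.1, this.2.trans (le_of_eq ?_)⟩
  simp only [Real.rpow_ofNat]
  rw [hv.tsum_eq, hw.tsum_eq, ← Real.sqrt_eq_rpow, ← Real.sqrt_eq_rpow,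
    Real.sqrt_sq (norm_nonneg _), Real.sqrt_sq (norm_nonneg _)]

theorem aux_compact {ι : Type*} (b : HilbertBasis ι ℂ H) (ρ : H →L[ℂ] H) (h0 : 0 ≤ ρ)
    (hs : Summable (fun i => (⟪b i, ρ (b i)⟫_ℂ).re)) : IsCompactOperator ρ := by
  obtain ⟨A, hA, hAρ⟩ : ∃ A : H →L[ℂ] H, IsSelfAdjoint A ∧ A * A = ρ :=
    ⟨CFC.sqrt ρ, (CFC.sqrt_nonneg ρ).isSelfAdjoint, CFC.sqrt_mul_sqrt_self ρ h0⟩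
  have hsym : ∀ x y, ⟪A x, y⟫_ℂ = ⟪x, A y⟫_ℂ := fun x y =>
    (ContinuousLinearMap.isSelfAdjoint_iff_isSymmetric.mp hA) x y
  have hn : ∀ i, (⟪b i, ρ (b i)⟫_ℂ).re = ‖A (b i)‖ ^ 2 := by
    intro i
    rw [← hAρ, mul_apply_eq_comp, ← hsym, inner_self_eq_norm_sq_to_K]; norm_cast
  simp only [hn] at hs
  let As : Finset ι → (H →L[ℂ] H) := fun s =>
    ∑ i ∈ s, (innerSL ℂ (A (b i))).smulRight (b i)
  have hcomp : ∀ s, IsCompactOperator (As s) := by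
    intro s
    have : As s ∈ compactOperator (RingHom.id ℂ) H H := by
      refine Submodule.sum_mem _ fun i _ => ?_
      have h1 : IsCompactOperator (ContinuousLinearMap.toSpanSingleton ℂ (b i)) :=
        isCompactOperator_of_locallyCompactSpace_rng _
      exact h1.comp_clm (innerSL ℂ (A (b i)))
    exact this
  have hbound : ∀ s, ‖A - As s‖ ^ 2 ≤ (∑' i, ‖A (b i)‖ ^ 2) - ∑ i ∈ s, ‖A (b i)‖ ^ 2 := by
    classical
    intro s
    have hsplit : HasSum (fun i => if i ∈ s then 0 else ‖A (b i)‖ ^ 2)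
        ((∑' i, ‖A (b i)‖ ^ 2) - ∑ i ∈ s, ‖A (b i)‖ ^ 2) := by
      have h1 := hs.hasSum.sub (hasSum_sum_of_ne_finset_zero (s := s)
        (f := fun i => if i ∈ s then ‖A (b i)‖ ^ 2 else 0) (by intro i hi; simp [hi]))
      have e1 : (fun i => if i ∈ s then 0 else ‖A (b i)‖ ^ 2) =
          fun i => ‖A (b i)‖ ^ 2 - if i ∈ s then ‖A (b i)‖ ^ 2 else 0 := by
        funext i; split_ifs <;> simp
      have e2 : (∑ i ∈ s, if i ∈ s then ‖A (b i)‖ ^ 2 else 0) = ∑ i ∈ s, ‖A (b i)‖ ^ 2 :=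
        Finset.sum_congr rfl (by intro i hi; simp [hi])
      rw [e2] at h1
      rw [e1]
      exact h1
    set R := (∑' i, ‖A (b i)‖ ^ 2) - ∑ i ∈ s, ‖A (b i)‖ ^ 2 with hR
    have hR0 : 0 ≤ R := hsplit.nonneg (by intro i; positivity)
    have : ‖A - As s‖ ≤ Real.sqrt R := by
      refine ContinuousLinearMap.opNorm_le_bound _ (Real.sqrt_nonneg _) fun x => ?_
      rw [← Real.sqrt_sq (norm_nonneg x), ← Real.sqrt_mul hR0]
      refine Real.le_sqrt_of_sq_le ?_
      have hp := aux_parseval b ((A - As s) x)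
      refine hasSum_le ?_ hp (hsplit.mul_right (‖x‖ ^ 2))
      intro i
      have hc : ⟪b i, (A - As s) x⟫_ℂ = if i ∈ s then 0 else ⟪A (b i), x⟫_ℂ := by
        have hAs : ⟪b i, As s x⟫_ℂ = if i ∈ s then ⟪A (b i), x⟫_ℂ else 0 := by
          simp only [As, sum_apply, ContinuousLinearMap.smulRight_apply,
            inner_sum, inner_smul_right, innerSL_apply_apply, orthonormal_iff_ite.mp b.orthonormal]
          simp
        rw [sub_apply, inner_sub_right, hAs, hsym]
        split_ifs <;> simp
      rw [hc]
      split_ifs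
      · simp
      · rw [← mul_pow]; gcongr; exact norm_inner_le_norm _ _
    calc _ ≤ Real.sqrt R ^ 2 := by gcongr
      _ = R := Real.sq_sqrt hR0
  have htend : Tendsto As atTop (nhds A) := by
    rw [tendsto_iff_norm_sub_tendsto_zero]
    have h2 : Tendsto (fun s => ‖As s - A‖ ^ 2) atTop (nhds 0) := by
      refine squeeze_zero (g := fun s => (∑' i, ‖A (b i)‖ ^ 2) - ∑ i ∈ s, ‖A (b i)‖ ^ 2)
        (fun _ => by positivity) (fun s => by rw [norm_sub_rev]; exact hbound s) ?_
      have := (tendsto_const_nhds (x := ∑' i, ‖A (b i)‖ ^ 2)).sub hs.hasSum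
      simpa using this
    have := h2.sqrt
    simpa [Real.sqrt_sq (norm_nonneg _)] using this
  have hAc : IsCompactOperator A := isCompactOperator_of_tendsto htend (Eventually.of_forall hcomp)
  have := hAc.clm_comp A
  rw [← hAρ]
  exact this

open scoped ComplexOrder in
theorem aux_eigenbasis {H : Type u} [NormedAddCommGroup H] [InnerProductSpace ℂ H]
    [CompleteSpace H] {ι : Type*} (b : HilbertBasis ι ℂ H) (ρ : H →L[ℂ] H)
    (hρ : IsFiniteWeight b ρ) :
    ∃ (κ : Type u) (e : HilbertBasis κ ℂ H) (l : κ → ℝ),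
      ∀ k, 0 < l k ∧ ρ (e k) = (l k : ℂ) • e k := by
  obtain ⟨h0, hinj, hs⟩ := hρ
  have hc := aux_compact b ρ h0 hs
  have hpos : ρ.IsPositive := (ContinuousLinearMap.nonneg_iff_isPositive ρ).mp h0
  have hsym : (ρ : H →ₗ[ℂ] H).IsSymmetric := hpos.isSymmetric
  have hbot := ContinuousLinearMap.orthogonalComplement_iSup_eigenspaces_eq_bot hc hsym
  have hof := hsym.orthogonalFamily_eigenspaces
  have hcs : ∀ μ : ℂ, CompleteSpace (Module.End.eigenspace (ρ : H →ₗ[ℂ] H) μ) := by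
    intro μ
    have : IsClosed (Module.End.eigenspace (ρ : H →ₗ[ℂ] H) μ : Set H) := by
      have : (Module.End.eigenspace (ρ : H →ₗ[ℂ] H) μ : Set H) = {x | ρ x = μ • x} := by
        ext x; simp
      rw [this]
      exact isClosed_eq ρ.continuous (by fun_prop)
    exact this.completeSpace_coe
  choose w B hB using fun μ : ℂ =>
    exists_hilbertBasis ℂ (Module.End.eigenspace (ρ : H →ₗ[ℂ] H) μ)
  have hon := hof.orthonormal_sigma_orthonormal (v_family := fun μ => B μ)
    (fun μ => (B μ).orthonormal)
  set v : (Σ μ : ℂ, w μ) → H := fun a => ((B a.1 a.2 : _) : H) with hv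
  have hon' : Orthonormal ℂ v := hon
  have hsp : (Submodule.span ℂ (Set.range v))ᗮ = ⊥ := by
    rw [eq_bot_iff, ← hbot]
    intro x hx
    rw [Submodule.mem_orthogonal'] at hx
    rw [← Submodule.iInf_orthogonal, Submodule.mem_iInf]
    intro μ
    rw [Submodule.mem_orthogonal]
    intro u hu
    have h1 := (B μ).hasSum_repr ⟨u, hu⟩
    have h2 := h1.mapL ((innerSL ℂ x).comp (Submodule.subtypeL _))
    have h3 : ⟪x, u⟫_ℂ = 0 := by
      refine (h2.unique ?_)
      convert hasSum_zero using 1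
      ext j
      have := hx (v ⟨μ, j⟩) (Submodule.subset_span ⟨_, rfl⟩)
      simp only [hv] at this
      simp [this]
    rw [← inner_conj_symm, h3, map_zero]
  refine ⟨_, HilbertBasis.mkOfOrthogonalEqBot hon' hsp, fun a => a.1.re, fun a => ?_⟩
  rw [HilbertBasis.coe_mkOfOrthogonalEqBot]
  have hev : ρ (v a) = a.1 • v a := Module.End.mem_eigenspace_iff.mp (B a.1 a.2).2
  have hnorm : ‖v a‖ = 1 := hon'.1 a
  have hin : ⟪v a, ρ (v a)⟫_ℂ = a.1 := by
    rw [hev, inner_smul_right, inner_self_eq_norm_sq_to_K, hnorm]; simp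
  have hnn : (0 : ℂ) ≤ a.1 := by rw [← hin]; exact hpos.inner_nonneg_right _
  have hre : ((a.1.re : ℝ) : ℂ) = a.1 := by
    have := Complex.le_def.mp hnn
    apply Complex.ext <;> simp [this.2.symm]
  refine ⟨?_, by rw [hre, hev]⟩
  have hge : 0 ≤ a.1.re := by simpa using (Complex.le_def.mp hnn).1
  refine lt_of_le_of_ne hge fun h => ?_
  have hz : a.1 = 0 := by rw [← hre]; exact_mod_cast h.symm
  rw [hz, zero_smul] at hev
  have : v a = 0 := hinj (by rw [hev, map_zero])
  rw [this] at hnorm; simp at hnorm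

theorem aux_cfc_eigen (ρ : H →L[ℂ] H) (h0 : 0 ≤ ρ) (f : ℝ → ℝ) (l : ℝ) (hl : 0 < l) (e : H)
    (he : ρ e = (l : ℂ) • e) (hf : ContinuousOn f (Set.Ici 0)) (hd : DifferentiableAt ℝ f l) :
    cfc f ρ e = (f l : ℂ) • e := by
  have hsa : IsSelfAdjoint ρ := h0.isSelfAdjoint
  have hspec : spectrum ℝ ρ ⊆ Set.Ici 0 := fun x hx => spectrum_nonneg_of_nonneg h0 hx
  have hq : ContinuousOn (dslope f l) (Set.Ici 0) :=
    (continuousOn_dslope (Ici_mem_nhds hl)).mpr ⟨hf, hd⟩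
  have hq' := hq.mono hspec
  have key : cfc f ρ = cfc (dslope f l) ρ * (ρ - algebraMap ℝ _ l) + algebraMap ℝ _ (f l) := by
    have h1 : cfc f ρ = cfc (fun x => dslope f l x * (x - l) + f l) ρ := by
      refine cfc_congr fun x _ => ?_
      have := sub_smul_dslope f l x
      simp only [smul_eq_mul] at this
      linarith
    rw [h1, cfc_add_const _ (fun x => dslope f l x * (x - l)) _ (ContinuousOn.mul hq' (continuousOn_id.sub continuousOn_const)) hsa,
      cfc_mul _ _ ρ hq' (by fun_prop),
      cfc_sub _ _ ρ (by fun_prop) (by fun_prop), cfc_const _ ρ hsa, cfc_id' ℝ ρ hsa]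
  rw [key]
  have hz : (ρ - algebraMap ℝ (H →L[ℂ] H) l) e = 0 := by
    rw [sub_apply, he, Algebra.algebraMap_eq_smul_one]
    simp
  rw [add_apply, mul_apply_eq_comp, hz, map_zero, zero_add, Algebra.algebraMap_eq_smul_one]
  simp

theorem aux_trace {ι κ : Type*} (b : HilbertBasis ι ℂ H) (e : HilbertBasis κ ℂ H)
    (ρ : H →L[ℂ] H) (hρ : IsFiniteWeight b ρ) (l : κ → ℝ)
    (hl : ∀ k, 0 < l k ∧ ρ (e k) = (l k : ℂ) • e k) :
    Summable l ∧ ∀ T : H →L[ℂ] H, trElem b (ρ * T) = ∑' k, l k * (⟪e k, T (e k)⟫_ℂ).re := by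
  obtain ⟨h0, -, hs⟩ := hρ
  have hsym : ∀ x y, ⟪ρ x, y⟫_ℂ = ⟪x, ρ y⟫_ℂ := fun x y =>
    (ContinuousLinearMap.isSelfAdjoint_iff_isSymmetric.mp h0.isSelfAdjoint) x y
  have hexp : ∀ x y, HasSum (fun k => (l k : ℂ) * (⟪x, e k⟫_ℂ * ⟪e k, y⟫_ℂ)) ⟪x, ρ y⟫_ℂ := by
    intro x y
    have h := e.hasSum_inner_mul_inner x (ρ y)
    have e1 : (fun k => (l k : ℂ) * (⟪x, e k⟫_ℂ * ⟪e k, y⟫_ℂ)) =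
        fun k => ⟪x, e k⟫_ℂ * ⟪e k, ρ y⟫_ℂ := by
      funext k
      rw [← hsym, (hl k).2, inner_smul_left, Complex.conj_ofReal]; ring
    rw [e1]; exact h
  have hdiag : ∀ i, HasSum (fun k => l k * ‖⟪b i, e k⟫_ℂ‖ ^ 2) (⟪b i, ρ (b i)⟫_ℂ).re := by
    intro i
    have h := Complex.hasSum_re (hexp (b i) (b i))
    have e1 : (fun k => l k * ‖⟪b i, e k⟫_ℂ‖ ^ 2) =
        fun k => ((l k : ℂ) * (⟪b i, e k⟫_ℂ * ⟪e k, b i⟫_ℂ)).re := by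
      funext k
      rw [← inner_conj_symm (e k) (b i), Complex.mul_conj, ← Complex.ofReal_mul, Complex.ofReal_re,
        Complex.normSq_eq_norm_sq]
    rw [e1]; exact h
  have hp : Summable (fun p : ι × κ => l p.2 * ‖⟪b p.1, e p.2⟫_ℂ‖ ^ 2) := by
    rw [summable_prod_of_nonneg (fun p => mul_nonneg (hl _).1.le (by positivity))]
    exact ⟨fun i => (hdiag i).summable, by simpa only [(hdiag _).tsum_eq] using hs⟩
  have hls : Summable l := by
    have h1 := hp.prod_symm
    rw [summable_prod_of_nonneg (fun p => mul_nonneg (hl _).1.le (by positivity))] at h1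
    refine h1.2.congr fun k => ?_
    have := (aux_parseval b (e k)).mul_left (l k)
    rw [e.orthonormal.1 k] at this
    simpa using this.tsum_eq
  refine ⟨hls, fun T => ?_⟩
  -- absolute summability of the double family
  let G : κ × ι → ℂ := fun p => (l p.1 : ℂ) * (⟪b p.2, e p.1⟫_ℂ * ⟪e p.1, T (b p.2)⟫_ℂ)
  have hGn : ∀ k i, ‖G (k, i)‖ = l k * (‖⟪b i, e k⟫_ℂ‖ * ‖⟪b i, (star T) (e k)⟫_ℂ‖) := by
    intro k i
    simp only [G, norm_mul, Complex.norm_real, Real.norm_eq_abs, abs_of_pos (hl k).1]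
    rw [← norm_inner_symm ((star T) (e k)) (b i), ContinuousLinearMap.star_eq_adjoint,
      ContinuousLinearMap.adjoint_inner_left]
  have hG : Summable G := by
    refine Summable.of_norm ?_
    rw [summable_prod_of_nonneg (fun p => norm_nonneg _)]
    refine ⟨fun k => ?_, ?_⟩
    · simp only [hGn]
      exact (aux_summable_mul b _ _).1.mul_left _
    · refine Summable.of_nonneg_of_le (fun k => tsum_nonneg fun i => norm_nonneg _) (fun k => ?_)
        (hls.mul_right ‖star T‖)
      simp only [hGn]
      rw [tsum_mul_left]
      refine mul_le_mul_of_nonneg_left ((aux_summable_mul b _ _).2.trans ?_) (hl k).1.le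
      rw [e.orthonormal.1 k, one_mul]
      have := (star T).le_opNorm (e k)
      rwa [e.orthonormal.1 k, mul_one] at this
  have hcol : ∀ k, HasSum (fun i => G (k, i)) ((l k : ℂ) * ⟪e k, T (e k)⟫_ℂ) := by
    intro k
    have h := (b.hasSum_inner_mul_inner ((star T) (e k)) (e k)).mul_left (l k : ℂ)
    rw [ContinuousLinearMap.star_eq_adjoint, ContinuousLinearMap.adjoint_inner_left] at h
    refine h.congr_fun ?_
    intro i
    simp only [G]
    rw [ContinuousLinearMap.adjoint_inner_left]; ring
  have hrow : ∀ i, HasSum (fun k => G (k, i)) ⟪b i, (ρ * T) (b i)⟫_ℂ := fun i =>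
    hexp (b i) (T (b i))
  have hsw : ∑' i, ⟪b i, (ρ * T) (b i)⟫_ℂ = ∑' k, (l k : ℂ) * ⟪e k, T (e k)⟫_ℂ := by
    have := hG.tsum_comm (f := fun k i => G (k, i))
    simpa only [(hrow _).tsum_eq, (hcol _).tsum_eq] using this
  have hsi : Summable (fun i => ⟪b i, (ρ * T) (b i)⟫_ℂ) := by
    have := hG.prod_symm.prod
    exact this.congr fun i => (hrow i).tsum_eq
  have hsk : Summable (fun k => (l k : ℂ) * ⟪e k, T (e k)⟫_ℂ) :=
    hG.prod.congr fun k => (hcol k).tsum_eq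
  have := congrArg Complex.re hsw
  rw [Complex.re_tsum hsi, Complex.re_tsum hsk] at this
  simpa [trElem] using this

theorem aux_opow_cont (σ : H →L[ℂ] H) (h0 : 0 ≤ σ) :
    ContinuousOn (opow σ) (Set.Ioi 0) := by
  have hspec : spectrum ℝ σ ⊆ Set.Ici 0 := fun x hx => spectrum_nonneg_of_nonneg h0 hx
  have hcomp : IsCompact (spectrum ℝ σ) := ContinuousFunctionalCalculus.isCompact_spectrum σ
  intro t ht
  refine ContinuousAt.continuousWithinAt ?_
  refine continuousAt_cfc_fun (f := fun t x => x ^ t) ?_ ?_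
  · have : ContinuousOn (fun p : ℝ × ℝ => p.2 ^ p.1) (Set.Ioi 0 ×ˢ spectrum ℝ σ) := by
      intro p hp
      exact (Real.continuousAt_rpow_of_pos (p.2, p.1) hp.1).comp_continuousWithinAt
        (f := fun p : ℝ × ℝ => (p.2, p.1)) (by fun_prop)
    rw [Metric.tendstoUniformlyOn_iff]
    intro ε hε
    obtain ⟨v, hv, hvu⟩ := hcomp.mem_uniformity_of_prod (f := fun t x : ℝ => x ^ t) this ht
      (Metric.dist_mem_uniformity hε)
    rw [IsOpen.nhdsWithin_eq isOpen_Ioi ht] at hv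
    filter_upwards [hv] with p hp x hx
    rw [dist_comm]
    exact hvu p hp x hx
  · filter_upwards [Ioi_mem_nhds ht] with s hs
    exact (Real.continuous_rpow_const (le_of_lt hs)).continuousOn

theorem aux_opow_norm (σ : H →L[ℂ] H) (h0 : 0 ≤ σ) (t : ℝ) (ht : t ∈ Set.Icc (0:ℝ) 1) :
    ‖opow σ t‖ ≤ max 1 ‖σ‖ := by
  refine norm_cfc_le (by positivity) fun x hx => ?_
  have hx0 : 0 ≤ x := spectrum_nonneg_of_nonneg h0 hx
  have hx1 : x ≤ max 1 ‖σ‖ := by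
    have := spectrum.norm_le_norm_mul_of_mem hx
    rw [Real.norm_of_nonneg hx0] at this
    have h1 : ‖(1 : H →L[ℂ] H)‖ ≤ 1 := ContinuousLinearMap.norm_id_le
    have h2 : x ≤ ‖σ‖ := this.trans (mul_le_of_le_one_right (norm_nonneg _) h1)
    exact h2.trans (le_max_right _ _)
  rw [Real.norm_of_nonneg (Real.rpow_nonneg hx0 _)]
  calc x ^ t ≤ (max 1 ‖σ‖) ^ t := Real.rpow_le_rpow hx0 hx1 ht.1
    _ ≤ (max 1 ‖σ‖) ^ (1:ℝ) := Real.rpow_le_rpow_of_exponent_le (le_max_left _ _) ht.2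
    _ = _ := Real.rpow_one _

theorem aux_logmean (l m : ℝ) (hl : 0 < l) (hm : 0 < m) :
    0 < (∫ s in (0:ℝ)..1, l ^ (1 - s) * m ^ s) ∧
    (Real.log m - Real.log l) * (∫ s in (0:ℝ)..1, l ^ (1 - s) * m ^ s) = m - l := by
  have hc : Continuous fun s : ℝ => l ^ (1 - s) * m ^ s :=
    (Continuous.rpow continuous_const (by fun_prop) (fun _ => Or.inl hl.ne')).mul
      (Continuous.rpow continuous_const (by fun_prop) (fun _ => Or.inl hm.ne'))
  constructor
  · exact intervalIntegral.intervalIntegral_pos_of_pos (hc.intervalIntegrable _ _)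
      (fun s => by positivity) zero_lt_one
  · rw [← intervalIntegral.integral_const_mul]
    have h := intervalIntegral.integral_eq_sub_of_hasDerivAt (a := 0) (b := 1)
      (f := fun s : ℝ => l ^ (1 - s) * m ^ s)
      (f' := fun s => (Real.log m - Real.log l) * (l ^ (1 - s) * m ^ s)) (fun s _ => by
        have h1 := ((hasDerivAt_id' s).const_sub 1).const_rpow hl
        have h2 := (hasDerivAt_id' s).const_rpow hm
        exact (h1.mul h2).congr_deriv (by ring)) ((hc.const_mul _).intervalIntegrable _ _)
    rw [h]; simp

theorem aux_duhamel (ρ σ X : H →L[ℂ] H) (h0 : 0 ≤ ρ) (h0' : 0 ≤ σ) (hX : IsSelfAdjoint X)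
    (hσX : IsExpPerturbed ρ σ X) (e f : H) (l m : ℝ) (hl : 0 < l) (hm : 0 < m)
    (he : ρ e = (l : ℂ) • e) (hf : σ f = (m : ℂ) • f) :
    ((Real.log l - Real.log m : ℝ) : ℂ) * ⟪f, e⟫_ℂ = ⟪f, X e⟫_ℂ := by
  have hpow : ∀ (τ : H →L[ℂ] H), 0 ≤ τ → ∀ (v : H) (c : ℝ), 0 < c → τ v = (c : ℂ) • v →
      ∀ t : ℝ, 0 ≤ t → opow τ t v = ((c ^ t : ℝ) : ℂ) • v := by
    intro τ hτ v c hc hv t ht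
    exact aux_cfc_eigen τ hτ (fun x => x ^ t) c hc v hv
      (Real.continuous_rpow_const ht).continuousOn (Real.differentiableAt_rpow_const_of_ne t hc.ne')
  have hsa : ∀ (τ : H →L[ℂ] H) (t : ℝ) (x y : H), ⟪opow τ t x, y⟫_ℂ = ⟪x, opow τ t y⟫_ℂ :=
    fun τ t x y => (ContinuousLinearMap.isSelfAdjoint_iff_isSymmetric.mp
      (cfc_predicate (fun x : ℝ => x ^ t) τ)) x y
  have hint : IntervalIntegrable (fun s => opow ρ (1 - s) * X * opow σ s) volume 0 1 := by
    rw [intervalIntegrable_iff_integrableOn_Ioo_of_le zero_le_one]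
    refine IntegrableOn.of_bound (by simp) (C := max 1 ‖ρ‖ * ‖X‖ * max 1 ‖σ‖) ?_ ?_
    · refine ContinuousOn.aestronglyMeasurable ?_ measurableSet_Ioo
      refine ContinuousOn.mul (ContinuousOn.mul ?_ continuousOn_const) ?_
      · exact (aux_opow_cont ρ h0).comp (by fun_prop) (fun s hs => by
          simp only [Set.mem_Ioi, sub_pos]; exact hs.2)
      · exact (aux_opow_cont σ h0').mono fun s hs => hs.1
    · refine (ae_restrict_iff' measurableSet_Ioo).mpr (Eventually.of_forall fun s hs => ?_)
      refine (norm_mul_le _ _).trans ?_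
      refine mul_le_mul ((norm_mul_le _ _).trans ?_) ?_ (norm_nonneg _) (by positivity)
      · exact mul_le_mul_of_nonneg_right
          (aux_opow_norm ρ h0 _ ⟨by linarith [hs.2], by linarith [hs.1]⟩) (norm_nonneg _)
      · exact aux_opow_norm σ h0' _ ⟨hs.1.le, hs.2.le⟩
  have h1 := hσX 1 zero_le_one
  let Φ : (H →L[ℂ] H) →L[ℂ] ℂ := (innerSL ℂ e).comp (ContinuousLinearMap.apply ℂ H f)
  have hΦ : ∀ A, Φ A = ⟪e, A f⟫_ℂ := fun A => rfl
  have h2 := congrArg Φ h1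
  rw [map_sub, ← ContinuousLinearMap.intervalIntegral_comp_comm Φ hint] at h2
  have h3 : ∀ s ∈ Set.uIcc (0:ℝ) 1, Φ (opow ρ (1 - s) * X * opow σ s) =
      ((l ^ (1 - s) * m ^ s : ℝ) : ℂ) * ⟪e, X f⟫_ℂ := by
    intro s hs
    rw [Set.uIcc_of_le zero_le_one] at hs
    rw [hΦ, mul_apply_eq_comp, mul_apply_eq_comp, ← hsa,
      hpow ρ h0 e l hl he _ (by linarith [hs.2]), hpow σ h0' f m hm hf _ hs.1, map_smul,
      inner_smul_left, inner_smul_right, Complex.conj_ofReal]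
    push_cast; ring
  rw [intervalIntegral.integral_congr h3, intervalIntegral.integral_mul_const,
    intervalIntegral.integral_ofReal, hΦ, hΦ, ← hsa ρ, hpow ρ h0 e l hl he 1 zero_le_one,
    hpow σ h0' f m hm hf 1 zero_le_one, inner_smul_left, inner_smul_right, Complex.conj_ofReal,
    Real.rpow_one, Real.rpow_one] at h2
  obtain ⟨hc, hlm⟩ := aux_logmean l m hl hm
  set c := ∫ s in (0:ℝ)..1, l ^ (1 - s) * m ^ s
  have h4 : ((Real.log l - Real.log m : ℝ) : ℂ) * ⟪e, f⟫_ℂ = ⟪e, X f⟫_ℂ := by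
    have hc' : (c : ℂ) ≠ 0 := by exact_mod_cast hc.ne'
    have hlm' : ((Real.log m - Real.log l : ℝ) : ℂ) * c = m - l := by exact_mod_cast hlm
    apply mul_left_cancel₀ hc'
    push_cast at hlm' ⊢
    linear_combination (-⟪e, f⟫_ℂ) * hlm' - h2
  have h5 := congrArg (starRingEnd ℂ) h4
  rw [map_mul, Complex.conj_ofReal, inner_conj_symm, inner_conj_symm] at h5
  rw [h5]
  exact (ContinuousLinearMap.isSelfAdjoint_iff_isSymmetric.mp hX) f e

theorem aux_lip (n : ℕ) (l m : ℝ) (hl : 0 < l) (hm : 0 < m) :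
    |negLogTrunc n m - negLogTrunc n l| ≤ |Real.log l - Real.log m| := by
  have key : ∀ a b : ℝ, 0 < a → a ≤ b →
      |negLogTrunc n b - negLogTrunc n a| ≤ |Real.log a - Real.log b| := by
    intro a b ha hab
    have hb : 0 < b := ha.trans_le hab
    have he : 0 < Real.exp (-(n:ℝ)) := Real.exp_pos _
    unfold negLogTrunc
    have h1 : Real.log (a + Real.exp (-(n:ℝ))) ≤ Real.log (b + Real.exp (-(n:ℝ))) :=
      Real.log_le_log (by positivity) (by linarith)
    have h2 : Real.log a ≤ Real.log b := Real.log_le_log ha hab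
    have h3 : Real.log (b + Real.exp (-(n:ℝ))) + Real.log a ≤
        Real.log (a + Real.exp (-(n:ℝ))) + Real.log b := by
      rw [← Real.log_mul (by positivity) (by positivity),
        ← Real.log_mul (by positivity) (by positivity)]
      exact Real.log_le_log (by positivity) (by nlinarith)
    rw [abs_of_nonpos (by linarith), abs_of_nonpos (by linarith)]
    linarith
  rcases le_total l m with h | h
  · exact key l m hl h
  · rw [abs_sub_comm, abs_sub_comm (Real.log l)]
    exact key m l hm h

theorem aux_negLog_tendsto (m : ℝ) (hm : 0 < m) :
    Tendsto (fun n : ℕ => negLogTrunc n m) atTop (nhds (-Real.log m)) := by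
  unfold negLogTrunc
  refine Tendsto.neg ?_
  have h1 : Tendsto (fun n : ℕ => m + Real.exp (-(n:ℝ))) atTop (nhds (m + 0)) :=
    tendsto_const_nhds.add (Real.tendsto_exp_neg_atTop_nhds_zero.comp tendsto_natCast_atTop_atTop)
  rw [add_zero] at h1
  exact h1.log hm.ne'

theorem aux_negLog_eigen (n : ℕ) (ρ : H →L[ℂ] H) (h0 : 0 ≤ ρ) (l : ℝ) (hl : 0 < l) (e : H)
    (he : ρ e = (l : ℂ) • e) : cfc (negLogTrunc n) ρ e = (negLogTrunc n l : ℂ) • e := by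
  have hpos : ∀ x : ℝ, 0 ≤ x → x + Real.exp (-(n:ℝ)) ≠ 0 := fun x hx =>
    (add_pos_of_nonneg_of_pos hx (Real.exp_pos _)).ne'
  refine aux_cfc_eigen ρ h0 _ l hl e he ?_ ?_
  · unfold negLogTrunc
    exact (ContinuousOn.log (by fun_prop) (fun x hx => hpos x hx)).neg
  · unfold negLogTrunc
    have h : DifferentiableAt ℝ (fun x : ℝ => x + Real.exp (-(n:ℝ))) l := by fun_prop
    exact (h.log (hpos l hl.le)).neg

theorem aux_main {ι κ κ' : Type*} (b : HilbertBasis ι ℂ H) (e : HilbertBasis κ ℂ H)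
    (f : HilbertBasis κ' ℂ H) (ρ σ X : H →L[ℂ] H)
    (hρ : IsFiniteWeight b ρ) (hσ : IsFiniteWeight b σ) (hX : IsSelfAdjoint X)
    (hσX : IsExpPerturbed ρ σ X) (l : κ → ℝ) (m : κ' → ℝ)
    (hl : ∀ k, 0 < l k ∧ ρ (e k) = (l k : ℂ) • e k)
    (hm : ∀ k, 0 < m k ∧ σ (f k) = (m k : ℂ) • f k) :
    IsRelativeEntropy b ρ σ (trElem b (ρ * X)) := by
  obtain ⟨hls, htr⟩ := aux_trace b e ρ hρ l hl
  unfold IsRelativeEntropy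
  simp only [htr]
  let T : ℕ → (H →L[ℂ] H) := fun n => cfc (negLogTrunc n) σ - cfc (negLogTrunc n) ρ
  have hcoef : ∀ n k j, ⟪f j, T n (e k)⟫_ℂ =
      ((negLogTrunc n (m j) - negLogTrunc n (l k) : ℝ) : ℂ) * ⟪f j, e k⟫_ℂ := by
    intro n k j
    have hs : ⟪f j, cfc (negLogTrunc n) σ (e k)⟫_ℂ = ⟪cfc (negLogTrunc n) σ (f j), e k⟫_ℂ :=
      ((ContinuousLinearMap.isSelfAdjoint_iff_isSymmetric.mp
        (cfc_predicate (negLogTrunc n) σ)) (f j) (e k)).symm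
    simp only [T]
    rw [sub_apply, inner_sub_right, hs, aux_negLog_eigen n σ hσ.1 _ (hm j).1 _ (hm j).2,
      aux_negLog_eigen n ρ hρ.1 _ (hl k).1 _ (hl k).2, inner_smul_left, inner_smul_right,
      Complex.conj_ofReal]
    push_cast; ring
  have hduh : ∀ k j, ((Real.log (l k) - Real.log (m j) : ℝ) : ℂ) * ⟪f j, e k⟫_ℂ =
      ⟪f j, X (e k)⟫_ℂ := fun k j =>
    aux_duhamel ρ σ X hρ.1 hσ.1 hX hσX _ _ _ _ (hl k).1 (hm j).1 (hl k).2 (hm j).2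
  have hle : ∀ n k j, ‖⟪f j, T n (e k)⟫_ℂ‖ ≤ ‖⟪f j, X (e k)⟫_ℂ‖ := by
    intro n k j
    rw [hcoef, ← hduh, norm_mul, norm_mul, Complex.norm_real, Complex.norm_real]
    exact mul_le_mul_of_nonneg_right (aux_lip n _ _ (hl k).1 (hm j).1) (norm_nonneg _)
  have hTn : ∀ n k, ‖T n (e k)‖ ≤ ‖X‖ := by
    intro n k
    have h1 : ‖T n (e k)‖ ^ 2 ≤ ‖X (e k)‖ ^ 2 :=
      hasSum_le (fun j => pow_le_pow_left₀ (norm_nonneg _) (hle n k j) 2)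
        (aux_parseval f _) (aux_parseval f _)
    have h2 : ‖T n (e k)‖ ≤ ‖X (e k)‖ := le_of_sq_le_sq h1 (norm_nonneg _)
    have h3 := X.le_opNorm (e k)
    rw [e.orthonormal.1 k, mul_one] at h3
    exact h2.trans h3
  have hconv : ∀ k, Tendsto (fun n => ⟪e k, T n (e k)⟫_ℂ) atTop (nhds ⟪e k, X (e k)⟫_ℂ) := by
    intro k
    have hx : ∀ v, ⟪e k, v⟫_ℂ = ∑' j, ⟪e k, f j⟫_ℂ * ⟪f j, v⟫_ℂ := fun v =>
      (f.tsum_inner_mul_inner _ _).symm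
    simp only [hx (T _ (e k)), hx (X (e k))]
    refine tendsto_tsum_of_dominated_convergence (aux_summable_mul f (e k) (X (e k))).1 ?_ ?_
    · intro j
      refine Tendsto.const_mul _ ?_
      simp only [hcoef, ← hduh]
      refine Tendsto.mul_const _ ?_
      refine (Complex.continuous_ofReal.tendsto _).comp ?_
      have := (aux_negLog_tendsto _ (hm j).1).sub (aux_negLog_tendsto _ (hl k).1)
      have e1 : -Real.log (m j) - -Real.log (l k) = Real.log (l k) - Real.log (m j) := by ring
      rwa [e1] at this
    · refine Eventually.of_forall fun n j => ?_
      rw [norm_mul, norm_inner_symm]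
      exact mul_le_mul_of_nonneg_left (hle n k j) (norm_nonneg _)
  refine tendsto_tsum_of_dominated_convergence (bound := fun k => l k * ‖X‖)
    (hls.mul_right _) ?_ ?_
  · intro k
    exact Tendsto.const_mul _ ((Complex.continuous_re.tendsto _).comp (hconv k))
  · refine Eventually.of_forall fun n k => ?_
    rw [norm_mul, Real.norm_of_nonneg (hl k).1.le]
    refine mul_le_mul_of_nonneg_left ?_ (hl k).1.le
    refine (Complex.abs_re_le_norm _).trans ((norm_inner_le_norm _ _).trans ?_)
    rw [e.orthonormal.1 k, one_mul]
    exact hTn n k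

theorem aux_trace_bound {ι κ : Type*} (b : HilbertBasis ι ℂ H) (e : HilbertBasis κ ℂ H)
    (ρ X : H →L[ℂ] H) (hρ : IsFiniteWeight b ρ) (l : κ → ℝ)
    (hl : ∀ k, 0 < l k ∧ ρ (e k) = (l k : ℂ) • e k) :
    |trElem b (ρ * X)| ≤ ‖X‖ * trElem b ρ := by
  obtain ⟨hls, htr⟩ := aux_trace b e ρ hρ l hl
  have h1 : trElem b ρ = ∑' k, l k := by
    have := htr 1
    rw [mul_one] at this
    rw [this]
    refine tsum_congr fun k => ?_
    rw [one_apply_eq_self, inner_self_eq_norm_sq_to_K, e.orthonormal.1 k]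
    simp
  have hb : ∀ k, ‖l k * (⟪e k, X (e k)⟫_ℂ).re‖ ≤ ‖X‖ * l k := by
    intro k
    rw [norm_mul, Real.norm_of_nonneg (hl k).1.le, mul_comm]
    refine mul_le_mul_of_nonneg_right ?_ (hl k).1.le
    refine (Complex.abs_re_le_norm _).trans ((norm_inner_le_norm _ _).trans ?_)
    have h3 := X.le_opNorm (e k)
    rw [e.orthonormal.1 k, mul_one] at h3
    rwa [e.orthonormal.1 k, one_mul]
  rw [htr, h1, ← tsum_mul_left, ← Real.norm_eq_abs]
  exact tsum_of_norm_bounded (hls.mul_left ‖X‖).hasSum hb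

end Helpers

/-- Let `ρ` be a faithful density operator (`Tr ρ = 1`) and let
`σ = ρ_X = exp (-(H₀+X))` with `ρ = exp (-H₀)` and `X` a bounded (self-adjoint) operator
satisfying the Araki condition for `ρ` (with Araki family `F` bounded by `M = ‖X‖_A`).
Then the relative entropy `S(ρ|σ) = Tr (ρ (log ρ - log σ))` is finite; indeed
`S(ρ|σ) = Tr (ρ X)`, so `|S(ρ|σ)| ≤ ‖X‖ · Tr ρ ≤ ‖X‖_A · Tr ρ`. -/
theorem statement13 {ι : Type*} (b : HilbertBasis ι ℂ H) (ρ σ X : H →L[ℂ] H)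
    (hρ : IsFiniteWeight b ρ) (hρtr : trElem b ρ = 1) (hσ : IsFiniteWeight b σ)
    (hX : IsSelfAdjoint X)
    (F : ℂ → H →L[ℂ] H) (hF : IsArakiFamily ρ X F)
    (M : ℝ) (hM : ∀ t ∈ ball (0:ℂ) (1/2), ‖F t‖ ≤ M)
    (hσX : IsExpPerturbed ρ σ X) :
    ∃ S : ℝ, IsRelativeEntropy b ρ σ S ∧ S = trElem b (ρ * X) ∧
      |S| ≤ ‖X‖ * trElem b ρ ∧ |S| ≤ M * trElem b ρ := by
  obtain ⟨κ, e, l, hl⟩ := aux_eigenbasis b ρ hρ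
  obtain ⟨κ', f, m, hm⟩ := aux_eigenbasis b σ hσ
  have hb := aux_trace_bound b e ρ X hρ l hl
  refine ⟨trElem b (ρ * X), aux_main b e f ρ σ X hρ hσ hX hσX l m hl hm, rfl, hb, ?_⟩
  refine hb.trans (mul_le_mul_of_nonneg_right ?_ (by rw [hρtr]; exact zero_le_one))
  have h1 : opow ρ 0 = 1 := by
    unfold opow
    simp only [Real.rpow_zero]
    exact cfc_const_one ℝ ρ hρ.1.isSelfAdjoint
  have h2 := hF.2.2.1 0 le_rfl (by norm_num)
  rw [h1, mul_one, one_mul] at h2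
  rw [← h2]
  exact hM _ (by simp)
end
end

section
/- Let ρ = exp(−H₀) be a finite faithful weight on a separable Hilbert space H, let X and Y be bounded operators each satisfying the Araki condition for ρ, and let λ ∈ (0,1). Then λX + (1−λ)Y satisfies the Araki condition for ρ, and if the weights ρ_X = exp(−(H₀+X)) and ρ_Y = exp(−(H₀+Y)) are both nearby ρ, then the weight ρ_{λX+(1−λ)Y} = exp(−(H₀ + λX + (1−λ)Y)) is also nearby ρ, with constant exp(λ‖X‖_A + (1−λ)‖Y‖_A). Hence the set of weights nearby ρ carries the canonical (+1)-affine structure via convex combinations of the relative Hamiltonians. -/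
open scoped InnerProductSpace ENNReal NNReal
open MeasureTheory Metric Filter

noncomputable section

variable {H : Type*} [NormedAddCommGroup H] [InnerProductSpace ℂ H] [CompleteSpace H]
  [TopologicalSpace.SeparableSpace H]

theorem picard_bound {E : Type*} [NormedAddCommGroup E] [NormedSpace ℝ E]
    (L : ℝ → E →L[ℝ] E) (M : ℝ) (hM : ∀ t, ‖L t‖ ≤ M)
    (g : ℝ → E) (n : ℕ) (C : ℝ)
    (hg : ∀ t, ‖g t‖ ≤ C * (M * |t|) ^ n / n.factorial) (t : ℝ) :
    ‖∫ s in (0:ℝ)..t, L s (g s)‖ ≤ C * (M * |t|) ^ (n + 1) / (n + 1).factorial := by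
  have hM0 : 0 ≤ M := (norm_nonneg _).trans (hM 0)
  have key : ∀ s, ‖L s (g s)‖ ≤ (C * M ^ (n+1) / n.factorial) * |s - 0| ^ n := by
    intro s
    calc ‖L s (g s)‖ ≤ ‖L s‖ * ‖g s‖ := (L s).le_opNorm _
      _ ≤ M * (C * (M * |s|) ^ n / n.factorial) := by
        gcongr
        · exact hM s
        · exact hg s
      _ = _ := by rw [mul_pow, pow_succ, sub_zero]; ring
  rw [intervalIntegral.norm_integral_eq_norm_integral_uIoc]
  refine (MeasureTheory.norm_integral_le_of_norm_le
    (g := fun s => (C * M ^ (n+1) / n.factorial) * |s - 0| ^ n) ?_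
    (Eventually.of_forall key)).trans ?_
  · rw [← IntegrableOn, ← intervalIntegrable_iff]
    exact Continuous.intervalIntegrable (by fun_prop) _ _
  · rw [integral_const_mul, integral_pow_abs_sub_uIoc, sub_zero, mul_pow, Nat.factorial_succ]
    apply le_of_eq
    push_cast
    field_simp

noncomputable def picardIter {E : Type*} [NormedAddCommGroup E] [NormedSpace ℝ E]
    (L : ℝ → E →L[ℝ] E) (y : E) : ℕ → ℝ → E
  | 0 => fun _ => y
  | n+1 => fun t => ∫ s in (0:ℝ)..t, L s (picardIter L y n s)

theorem linear_ode_exists {E : Type*} [NormedAddCommGroup E] [NormedSpace ℝ E] [CompleteSpace E]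
    (L : ℝ → E →L[ℝ] E) (hL : Continuous L) (M : ℝ) (hM : ∀ t, ‖L t‖ ≤ M) (y : E) :
    ∃ f : ℝ → E, f 0 = y ∧ ∀ t ∈ Set.Ioo (-1:ℝ) 1, HasDerivAt f (L t (f t)) t := by
  have hM0 : 0 ≤ M := (norm_nonneg _).trans (hM 0)
  have hc : ∀ n, Continuous (picardIter L y n) := by
    intro n
    induction n with
    | zero => exact continuous_const
    | succ n ih =>
      exact intervalIntegral.continuous_primitive
        (fun a b => (hL.clm_apply ih).intervalIntegrable a b) 0
  have hb : ∀ n t, ‖picardIter L y n t‖ ≤ ‖y‖ * (M * |t|) ^ n / n.factorial := by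
    intro n
    induction n with
    | zero => intro t; simp [picardIter]
    | succ n ih => intro t; exact picard_bound L M hM _ n _ ih t
  have hd : ∀ n t, HasDerivAt (picardIter L y (n+1)) (L t (picardIter L y n t)) t := by
    intro n t
    exact (hL.clm_apply (hc n)).integral_hasStrictDerivAt 0 t |>.hasDerivAt
  have hs : ∀ t, Summable (fun n => picardIter L y n t) := fun t =>
    Summable.of_norm_bounded (g := fun n => ‖y‖ * ((M * |t|) ^ n / n.factorial))
      ((Real.summable_pow_div_factorial _).mul_left _)
      (fun n => by rw [← mul_div_assoc]; exact hb n t)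
  have h0 : ∀ n, picardIter L y (n+1) 0 = 0 := fun n => by simp [picardIter]
  have hgz : ∀ t, picardIter L y 0 t = y := fun t => rfl
  generalize picardIter L y = g at *
  refine ⟨fun t => ∑' n, g n t, ?_, ?_⟩
  · show ∑' n, g n 0 = y
    rw [(hs 0).tsum_eq_zero_add]
    simp [h0, hgz]
  · intro t ht
    have e : (fun t => ∑' n, g n t)
        = fun t => y + ∑' n, g (n+1) t := by
      funext t
      rw [(hs t).tsum_eq_zero_add, hgz]
    have hu : Summable (fun n : ℕ => (M * ‖y‖) * (M ^ n / n.factorial)) :=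
      (Real.summable_pow_div_factorial M).mul_left _
    have : HasDerivAt (fun t => ∑' n, g (n+1) t)
        (∑' n, L t (g n t)) t := by
      refine hasDerivAt_tsum_of_isPreconnected (𝕜 := ℝ) (F := E) (α := ℕ)
        (t := Set.Ioo (-1:ℝ) 1) (g := fun n => g (n+1)) (g' := fun n s => L s (g n s)) (y := t)
        (u := fun n => (M * ‖y‖) * (M ^ n / n.factorial))
        hu isOpen_Ioo isPreconnected_Ioo
        (fun n s _ => hd n s) ?_ (y₀ := 0) ⟨by norm_num, by norm_num⟩ ?_ ht
      · intro n s hs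
        have hs1 : |s| ≤ 1 := abs_le.2 ⟨hs.1.le, hs.2.le⟩
        calc ‖L s (g n s)‖ ≤ ‖L s‖ * ‖g n s‖ := (L s).le_opNorm _
          _ ≤ M * (‖y‖ * (M * |s|) ^ n / n.factorial) := by
            gcongr
            · exact hM s
            · exact hb n s
          _ ≤ M * (‖y‖ * (M * 1) ^ n / n.factorial) := by gcongr
          _ = _ := by rw [mul_one]; ring
      · simp [h0]
    have h2 := this.const_add y
    rw [← (L t).map_tsum (hs t)] at h2
    rw [← e] at h2
    exact h2

/-- solution bound -/
theorem ode_bound {E : Type*} [NormedAddCommGroup E] [NormedSpace ℝ E]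
    (f f' : ℝ → E) (M : ℝ) (hf : ∀ t ∈ Set.Ioo (-1:ℝ) 1, HasDerivAt f (f' t) t)
    (hM : ∀ t, ‖f' t‖ ≤ M * ‖f t‖) (t : ℝ) (ht0 : 0 ≤ t) (ht : t < 1) :
    ‖f t‖ ≤ ‖f 0‖ * Real.exp (M * t) := by
  have := norm_le_gronwallBound_of_norm_deriv_right_le (f := f) (f' := f') (a := 0) (b := t)
    (δ := ‖f 0‖) (K := M) (ε := 0)
    (fun s hs => (hf s ⟨by linarith [hs.1], by linarith [hs.2]⟩).continuousAt.continuousWithinAt)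
    (fun s hs => (hf s ⟨by linarith [hs.1], by linarith [hs.2]⟩).hasDerivWithinAt)
    le_rfl (fun s _ => by simpa using hM s) t ⟨ht0, le_rfl⟩
  simpa [gronwallBound_ε0] using this

/-- The two propagators of the linear equation with generator F, inverse to each other. -/
theorem propagators {A : Type*} [NormedRing A] [NormedAlgebra ℝ A] [CompleteSpace A] 
    (h1 : ‖(1:A)‖ ≤ 1) (F : ℝ → A) (hF : Continuous F) (M : ℝ) (hM : ∀ t, ‖F t‖ ≤ M) :
    ∃ V W : ℝ → A, V 0 = 1 ∧ (∀ t ∈ Set.Ioo (-1:ℝ) 1, HasDerivAt V (-(V t * F t)) t) ∧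
      (∀ t, 0 ≤ t → t < 1 → W t * V t = 1) ∧
      (∀ t, 0 ≤ t → t < 1 → ‖V t‖ ≤ Real.exp (M * t)) ∧
      (∀ t, 0 ≤ t → t < 1 → ‖W t‖ ≤ Real.exp (M * t)) := by
  have hM0 : 0 ≤ M := (norm_nonneg _).trans (hM 0)
  obtain ⟨V, hV0, hV⟩ := linear_ode_exists (fun t => -((ContinuousLinearMap.mul ℝ A).flip (F t)))
    (by fun_prop) M (fun t => by
      rw [norm_neg]
      refine ContinuousLinearMap.opNorm_le_bound _ hM0 (fun x => ?_)
      simp only [ContinuousLinearMap.flip_apply, ContinuousLinearMap.mul_apply']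
      rw [mul_comm M]
      exact (norm_mul_le _ _).trans (by gcongr; exact hM t)) (1 : A)
  obtain ⟨W, hW0, hW⟩ := linear_ode_exists (fun t => ((ContinuousLinearMap.mul ℝ A) (F t)))
    (by fun_prop) M (fun t => by
      refine ContinuousLinearMap.opNorm_le_bound _ hM0 (fun x => ?_)
      simp only [ContinuousLinearMap.mul_apply']
      exact (norm_mul_le _ _).trans (by gcongr; exact hM t)) (1 : A)
  simp only [neg_apply, ContinuousLinearMap.flip_apply,
    ContinuousLinearMap.mul_apply'] at hV hW
  refine ⟨V, W, hV0, hV, ?_, ?_, ?_⟩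
  · intro t ht0 ht
    have := ode_bound (fun s => W s * V s - 1) (fun s => F s * (W s * V s - 1)
        - (W s * V s - 1) * F s) (2 * M) ?_ ?_ t ht0 ht
    · simp only [hW0, hV0, mul_one, sub_self, norm_zero, zero_mul] at this
      exact sub_eq_zero.1 (norm_le_zero_iff.1 this)
    · intro s hs
      have := ((hW s hs).mul (hV s hs)).sub_const 1
      refine this.congr_deriv ?_
      noncomm_ring
    · intro s
      refine (norm_sub_le _ _).trans ?_
      have h1 := norm_mul_le (F s) (W s * V s - 1)
      have h2 := norm_mul_le (W s * V s - 1) (F s)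
      have := mul_le_mul_of_nonneg_right (hM s) (norm_nonneg (W s * V s - 1))
      linarith
  · intro t ht0 ht
    have := ode_bound V _ M hV (fun s => by
      rw [norm_neg, mul_comm M]
      exact (norm_mul_le _ _).trans (by gcongr; exact hM s)) t ht0 ht
    rw [hV0] at this
    refine this.trans (mul_le_of_le_one_left (Real.exp_pos _).le h1)
  · intro t ht0 ht
    have := ode_bound W _ M hW (fun s =>
      (norm_mul_le _ _).trans (by gcongr; exact hM s)) t ht0 ht
    rw [hW0] at this
    refine this.trans (mul_le_of_le_one_left (Real.exp_pos _).le h1)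


theorem opow_selfAdjoint (a : H →L[ℂ] H) (t : ℝ) : IsSelfAdjoint (opow a t) :=
  cfc_predicate _ _

theorem opow_one (a : H →L[ℂ] H) (ha : 0 ≤ a) : opow a 1 = a := by
  have : IsSelfAdjoint a := IsSelfAdjoint.of_nonneg ha
  unfold opow
  simp only [Real.rpow_one]
  exact cfc_id' ℝ a

theorem opow_mul (a : H →L[ℂ] H) (ha : 0 ≤ a) (s t : ℝ) (hs : 0 ≤ s) (ht : 0 ≤ t) :
    opow a s * opow a t = opow a (s + t) := by
  have : IsSelfAdjoint a := IsSelfAdjoint.of_nonneg ha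
  unfold opow
  rw [← cfc_mul (fun x : ℝ => x ^ s) (fun x : ℝ => x ^ t) a
    (Real.continuous_rpow_const hs).continuousOn (Real.continuous_rpow_const ht).continuousOn]
  refine cfc_congr (fun x hx => ?_)
  have hx0 : 0 ≤ x := spectrum_nonneg_of_nonneg ha hx
  exact (Real.rpow_add_of_nonneg hx0 hs ht).symm

theorem opow_norm_le (a : H →L[ℂ] H) (ha : 0 ≤ a) (t : ℝ) (ht : 0 ≤ t) (ht1 : t ≤ 1) :
    ‖opow a t‖ ≤ 1 + ‖a‖ := by
  refine norm_cfc_le (by positivity) (fun x hx => ?_)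
  have hx0 : 0 ≤ x := spectrum_nonneg_of_nonneg ha hx
  have hx1 : x ≤ ‖a‖ := by
    have h := spectrum.norm_le_norm_mul_of_mem hx
    have h1 : ‖(1 : H →L[ℂ] H)‖ ≤ 1 := ContinuousLinearMap.norm_id_le
    have h2 := mul_le_mul_of_nonneg_left h1 (norm_nonneg a)
    have h3 := le_abs_self x
    rw [Real.norm_eq_abs] at h
    linarith
  rw [Real.norm_of_nonneg (Real.rpow_nonneg hx0 t)]
  calc x ^ t ≤ (1 + ‖a‖) ^ t := Real.rpow_le_rpow hx0 (by linarith) ht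
    _ ≤ (1 + ‖a‖) ^ (1:ℝ) := Real.rpow_le_rpow_of_exponent_le (by linarith [norm_nonneg a]) ht1
    _ = _ := Real.rpow_one _

theorem opow_continuousOn (a : H →L[ℂ] H) : ContinuousOn (opow a) (Set.Ioi 0) := by
  intro t ht
  refine ContinuousAt.continuousWithinAt ?_
  unfold opow
  refine continuousAt_cfc_fun ?_ ?_
  · rw [tendstoUniformlyOn_iff_tendstoUniformly_comp_coe]
    have : CompactSpace (spectrum ℝ a) := isCompact_iff_compactSpace.1 (spectrum.isCompact a)
    refine ContinuousOn.tendstoUniformly (f := fun (s : ℝ) (x : spectrum ℝ a) => (x : ℝ) ^ s)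
      (Ioi_mem_nhds ht) ?_
    rintro ⟨s, x⟩ ⟨hs, -⟩
    refine ContinuousAt.continuousWithinAt ?_
    exact ContinuousAt.rpow (f := fun p : ℝ × spectrum ℝ a => (p.2 : ℝ)) (g := fun p => p.1)
      (by fun_prop) (by fun_prop) (Or.inr hs)
  · filter_upwards [Ioi_mem_nhds ht] with s hs
    exact (Real.continuous_rpow_const (le_of_lt hs)).continuousOn

/-- integrability of the Duhamel integrand -/
theorem duhamel_integrable (ρ σ Z : H →L[ℂ] H) (hρ : 0 ≤ ρ) (hσ : 0 ≤ σ) (t : ℝ) (ht : 0 ≤ t)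
    (ht1 : t ≤ 1) :
    IntervalIntegrable (fun s => opow ρ (t - s) * Z * opow σ s) volume 0 t := by
  rw [intervalIntegrable_iff_integrableOn_Ioo_of_le ht]
  refine IntegrableOn.of_bound (by simp) ?_ ((1 + ‖ρ‖) * ‖Z‖ * (1 + ‖σ‖)) ?_
  · refine ContinuousOn.aestronglyMeasurable ?_ measurableSet_Ioo
    refine ContinuousOn.mul (ContinuousOn.mul ?_ continuousOn_const) ?_
    · exact (opow_continuousOn ρ).comp (by fun_prop) (fun s hs => by
        simp only [Set.mem_Ioi]; linarith [hs.2])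
    · exact (opow_continuousOn σ).mono (fun s hs => hs.1)
  · refine (ae_restrict_iff' measurableSet_Ioo).2 (Eventually.of_forall fun s hs => ?_)
    refine (norm_mul_le _ _).trans ?_
    gcongr
    · refine (norm_mul_le _ _).trans ?_
      gcongr
      exact opow_norm_le ρ hρ _ (by linarith [hs.2]) (by linarith [hs.1])
    · exact opow_norm_le σ hσ _ hs.1.le (by linarith [hs.2])

theorem duhamel_star (ρ σ Z : H →L[ℂ] H) (hρ : 0 ≤ ρ) (hσ : 0 ≤ σ) (hZ : IsSelfAdjoint Z)
    (h : IsExpPerturbed ρ σ Z) (t : ℝ) (ht : 0 ≤ t) (ht1 : t ≤ 1) :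
    IntervalIntegrable (fun s => opow σ s * Z * opow ρ (t - s)) volume 0 t ∧
    opow σ t = opow ρ t - ∫ s in (0:ℝ)..t, opow σ s * Z * opow ρ (t - s) := by
  have hi := duhamel_integrable ρ σ Z hρ hσ t ht ht1
  have e : ∀ s, (starL' ℝ : (H →L[ℂ] H) ≃L[ℝ] (H →L[ℂ] H)).toContinuousLinearMap
      (opow ρ (t - s) * Z * opow σ s) = opow σ s * Z * opow ρ (t - s) := by
    intro s
    show star (opow ρ (t - s) * Z * opow σ s) = _
    rw [star_mul, star_mul, (opow_selfAdjoint _ _).star_eq, (opow_selfAdjoint _ _).star_eq,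
      hZ.star_eq, mul_assoc]
  have hint := ContinuousLinearMap.intervalIntegral_comp_comm
    (starL' ℝ : (H →L[ℂ] H) ≃L[ℝ] (H →L[ℂ] H)).toContinuousLinearMap hi
  constructor
  · rw [intervalIntegrable_iff] at hi ⊢
    have := ContinuousLinearMap.integrable_comp
      (starL' ℝ : (H →L[ℂ] H) ≃L[ℝ] (H →L[ℂ] H)).toContinuousLinearMap hi
    exact this.congr (Eventually.of_forall fun s => e s)
  · simp only [e] at hint
    rw [hint]
    have := congrArg star (h t ht)
    rw [star_sub, (opow_selfAdjoint _ _).star_eq, (opow_selfAdjoint _ _).star_eq] at this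
    exact this

/-- Volterra uniqueness. -/
theorem volterra_zero {E : Type*} [NormedAddCommGroup E] [NormedSpace ℝ E]
    (D : ℝ → E) (k : ℝ → ℝ → E) (T C K : ℝ) (hC : ∀ t ∈ Set.Icc 0 T, ‖D t‖ ≤ C)
    (hk : ∀ t ∈ Set.Icc 0 T, ∀ s ∈ Set.Icc 0 t, ‖k t s‖ ≤ K * ‖D s‖) (hK : 0 ≤ K)
    (h : ∀ t ∈ Set.Icc 0 T, D t = ∫ s in (0:ℝ)..t, k t s) :
    ∀ t ∈ Set.Icc 0 T, D t = 0 := by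
  have key : ∀ n : ℕ, ∀ t ∈ Set.Icc 0 T, ‖D t‖ ≤ C * ((K * t) ^ n / n.factorial) := by
    intro n
    induction n with
    | zero => simpa using hC
    | succ n ih =>
      intro t ht
      rw [h t ht]
      refine (intervalIntegral.norm_integral_le_of_norm_le (g := fun s =>
        (C * K ^ (n+1) / n.factorial) * s ^ n) ht.1 (Eventually.of_forall fun s hs => ?_)
        (Continuous.intervalIntegrable (by fun_prop) _ _)).trans ?_
      · refine (hk t ht s ⟨hs.1.le, hs.2⟩).trans ?_
        calc K * ‖D s‖ ≤ K * (C * ((K * s) ^ n / n.factorial)) := by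
              gcongr
              exact ih s ⟨hs.1.le, hs.2.trans ht.2⟩
          _ = _ := by rw [mul_pow, pow_succ]; ring
      · rw [intervalIntegral.integral_const_mul, integral_pow, mul_pow, Nat.factorial_succ]
        apply le_of_eq
        push_cast
        field_simp
        simp
  intro t ht
  have hlim : Tendsto (fun n : ℕ => C * ((K * t) ^ n / n.factorial)) atTop (nhds (C * 0)) :=
    (FloorSemiring.tendsto_pow_div_factorial_atTop (K * t)).const_mul C
  have := ge_of_tendsto' hlim (fun n => key n t ht)
  rw [mul_zero] at this
  exact norm_le_zero_iff.1 this

theorem star_bound (p s V : H →L[ℂ] H) (c : ℝ) (hs : s = V * p) (hV : ‖V‖ ≤ c) :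
    star s * s ≤ (c ^ 2) • (star p * p) := by
  have h1 := CStarAlgebra.star_left_conjugate_le_norm_smul (a := p) (b := star V * V)
    (IsSelfAdjoint.star_mul_self V)
  rw [hs]
  have e : star (V * p) * (V * p) = star p * (star V * V) * p := by
    rw [star_mul]; noncomm_ring
  rw [e]
  refine h1.trans ?_
  refine smul_le_smul_of_nonneg_right ?_ (star_mul_self_nonneg p)
  rw [CStarRing.norm_star_mul_self, ← sq]
  gcongr

/-- The cocycle bounds at time `t < 1/2`. -/
theorem core_bounds (ρ σ Z : H →L[ℂ] H) (hρ : 0 ≤ ρ) (hσ : 0 ≤ σ) (hZ : IsSelfAdjoint Z)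
    (h : IsExpPerturbed ρ σ Z) (F : ℂ → H →L[ℂ] H) (hF : IsArakiFamily ρ Z F) (M : ℝ)
    (hM : ∀ t ∈ ball (0:ℂ) (1/2), ‖F t‖ ≤ M) (T : ℝ) (hT0 : 0 ≤ T) (hT : T < 1/2) :
    opow σ (T + T) ≤ (Real.exp (M * T) ^ 2) • opow ρ (T + T) ∧
    opow ρ (T + T) ≤ (Real.exp (M * T) ^ 2) • opow σ (T + T) := by
  have hmem : ∀ s : ℝ, ((Set.projIcc 0 T hT0 s : ℝ) : ℂ) ∈ ball (0:ℂ) (1/2) := by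
    intro s
    have := (Set.projIcc 0 T hT0 s).2
    rw [mem_ball_zero_iff, Complex.norm_real, Real.norm_of_nonneg this.1]
    linarith [this.2]
  obtain ⟨G, hG⟩ : ∃ G : ℝ → H →L[ℂ] H, G = fun s => F ((Set.projIcc 0 T hT0 s : ℝ) : ℂ) :=
    ⟨_, rfl⟩
  have hGc : Continuous G := by
    rw [hG]
    refine hF.1.continuousOn.comp_continuous ?_ hmem
    exact Complex.continuous_ofReal.comp
      (continuous_subtype_val.comp continuous_projIcc)
  have hGM : ∀ s, ‖G s‖ ≤ M := fun s => by rw [hG]; exact hM _ (hmem s)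
  have hGr : ∀ s ∈ Set.Icc 0 T, G s * opow ρ s = opow ρ s * Z := by
    intro s hs
    have := hF.2.2.1 s hs.1 (by linarith [hs.2])
    rw [hG]
    simp only [Set.projIcc_of_mem hT0 hs]
    exact this
  have h1 : ‖(1 : H →L[ℂ] H)‖ ≤ 1 := ContinuousLinearMap.norm_id_le
  obtain ⟨V, W, hV0, hV, hWV, hVn, hWn⟩ := propagators h1 G hGc M hGM
  have hM0 : 0 ≤ M := (norm_nonneg _).trans (hGM 0)
  have hVc : ContinuousOn V (Set.Icc 0 T) := fun s hs =>
    (hV s ⟨by linarith [hs.1], by linarith [hs.2]⟩).continuousAt.continuousWithinAt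
  have hVG : ∀ t ∈ Set.Icc 0 T, IntervalIntegrable (fun s => V s * G s) volume 0 t := by
    intro t ht
    refine ContinuousOn.intervalIntegrable ?_
    rw [Set.uIcc_of_le ht.1]
    exact (hVc.mono (Set.Icc_subset_Icc_right ht.2)).mul hGc.continuousOn
  have hVint : ∀ t ∈ Set.Icc 0 T, V t = 1 - ∫ s in (0:ℝ)..t, V s * G s := by
    intro t ht
    have := intervalIntegral.integral_eq_sub_of_hasDerivAt (a := 0) (b := t) (f := V)
      (f' := fun s => -(V s * G s)) (fun s hs => by
        rw [Set.uIcc_of_le ht.1] at hs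
        exact hV s ⟨by linarith [hs.1], by linarith [hs.2, ht.2]⟩) (hVG t ht).neg
    rw [intervalIntegral.integral_neg, hV0] at this
    rw [sub_eq_add_neg, this]
    abel
  have hkey : ∀ t ∈ Set.Icc 0 T, ∀ s ∈ Set.Icc 0 t,
      V s * G s * opow ρ t = V s * opow ρ s * Z * opow ρ (t - s) := by
    intro t ht s hs
    have e : opow ρ t = opow ρ s * opow ρ (t - s) := by
      rw [opow_mul ρ hρ s (t - s) hs.1 (by linarith [hs.2])]
      congr 1
      ring
    rw [e, mul_assoc (V s), ← mul_assoc (G s), hGr s ⟨hs.1, hs.2.trans ht.2⟩]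
    simp only [mul_assoc]
  have hD : ∀ t ∈ Set.Icc 0 T, V t * opow ρ t - opow σ t = 0 := by
    refine volterra_zero (fun t => V t * opow ρ t - opow σ t)
      (fun t s => -((V s * opow ρ s - opow σ s) * (Z * opow ρ (t - s)))) T
      (Real.exp (M * T) * (1 + ‖ρ‖) + (1 + ‖σ‖)) (‖Z‖ * (1 + ‖ρ‖)) ?_ ?_ (by positivity) ?_
    · intro t ht
      refine (norm_sub_le _ _).trans ?_
      refine add_le_add ?_ (opow_norm_le σ hσ t ht.1 (by linarith [ht.2]))
      refine (norm_mul_le _ _).trans ?_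
      refine mul_le_mul ?_ (opow_norm_le ρ hρ t ht.1 (by linarith [ht.2])) (norm_nonneg _)
        (Real.exp_pos _).le
      refine (hVn t ht.1 (by linarith [ht.2])).trans ?_
      exact Real.exp_le_exp.2 (mul_le_mul_of_nonneg_left ht.2 hM0)
    · intro t ht s hs
      rw [norm_neg, mul_comm (‖Z‖ * (1 + ‖ρ‖))]
      refine (norm_mul_le _ _).trans ?_
      refine mul_le_mul_of_nonneg_left ?_ (norm_nonneg _)
      refine (norm_mul_le _ _).trans ?_
      exact mul_le_mul_of_nonneg_left (opow_norm_le ρ hρ _ (by linarith [hs.2])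
        (by linarith [hs.1, ht.2])) (norm_nonneg _)
    · intro t ht
      obtain ⟨hi, hs⟩ := duhamel_star ρ σ Z hρ hσ hZ h t ht.1 (by linarith [ht.2])
      have hi2 : IntervalIntegrable (fun s => V s * G s * opow ρ t) volume 0 t :=
        (hVG t ht).mul_const _
      have e1 : V t * opow ρ t = opow ρ t - ∫ s in (0:ℝ)..t, V s * G s * opow ρ t := by
        have e2 := ContinuousLinearMap.intervalIntegral_comp_comm
          ((ContinuousLinearMap.mul ℝ (H →L[ℂ] H)).flip (opow ρ t)) (hVG t ht)
        simp only [ContinuousLinearMap.flip_apply, ContinuousLinearMap.mul_apply'] at e2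
        rw [e2, hVint t ht, sub_mul, one_mul]
      show V t * opow ρ t - opow σ t = _
      rw [e1, hs, sub_sub_sub_cancel_left, ← intervalIntegral.integral_sub hi hi2]
      refine intervalIntegral.integral_congr (fun s hs => ?_)
      rw [Set.uIcc_of_le ht.1] at hs
      rw [hkey t ht s hs]
      noncomm_ring
  have hσT : opow σ T = V T * opow ρ T := (sub_eq_zero.1 (hD T ⟨hT0, le_rfl⟩)).symm
  have hρT : opow ρ T = W T * opow σ T := by
    rw [hσT, ← mul_assoc, hWV T hT0 (by linarith), one_mul]
  have b1 := star_bound _ _ _ _ hσT (hVn T hT0 (by linarith))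
  have b2 := star_bound _ _ _ _ hρT (hWn T hT0 (by linarith))
  rw [(opow_selfAdjoint _ _).star_eq, (opow_selfAdjoint _ _).star_eq,
    opow_mul _ hρ _ _ hT0 hT0, opow_mul _ hσ _ _ hT0 hT0] at b1 b2
  exact ⟨b1, b2⟩

theorem le_limit (a c : H →L[ℂ] H) (ha : 0 ≤ a) (hc : 0 ≤ c) (M : ℝ)
    (h : ∀ T : ℝ, 0 ≤ T → T < 1/2 →
      opow a (T + T) ≤ (Real.exp (M * T) ^ 2) • opow c (T + T)) :
    a ≤ Real.exp M • c := by
  have hcont : ∀ d : H →L[ℂ] H, 0 ≤ d →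
      Tendsto (fun T : ℝ => opow d (T + T)) (nhdsWithin (1/2) (Set.Iio (1/2))) (nhds d) := by
    intro d hd
    have h1 : ContinuousAt (opow d) ((1/2 : ℝ) + 1/2) :=
      (opow_continuousOn d).continuousAt (Ioi_mem_nhds (by norm_num))
    have h2 : ContinuousAt (fun T : ℝ => opow d (T + T)) (1/2) :=
      ContinuousAt.comp (f := fun T : ℝ => T + T) h1 (by fun_prop)
    have h3 := h2.tendsto
    have e : opow d ((1/2 : ℝ) + 1/2) = d := by
      rw [show (1/2 : ℝ) + 1/2 = 1 by norm_num, opow_one d hd]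
    rw [e] at h3
    exact h3.mono_left nhdsWithin_le_nhds
  have hexp : Tendsto (fun T : ℝ => Real.exp (M * T) ^ 2) (nhdsWithin (1/2) (Set.Iio (1/2)))
      (nhds (Real.exp M)) := by
    have h2 : ContinuousAt (fun T : ℝ => Real.exp (M * T) ^ 2) (1/2) := by fun_prop
    have h3 := h2.tendsto
    have e : Real.exp (M * (1/2)) ^ 2 = Real.exp M := by
      rw [sq, ← Real.exp_add]; congr 1; ring
    rw [e] at h3
    exact h3.mono_left nhdsWithin_le_nhds
  refine le_of_tendsto_of_tendsto (hcont a ha) (hexp.smul (hcont c hc)) ?_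
  filter_upwards [Ioo_mem_nhdsLT (show (0:ℝ) < 1/2 by norm_num)] with T hT
  exact h T hT.1.le hT.2

theorem araki_convex (ρ X Y : H →L[ℂ] H) (FX FY : ℂ → H →L[ℂ] H)
    (hFX : IsArakiFamily ρ X FX) (hFY : IsArakiFamily ρ Y FY) (l : ℝ) :
    IsArakiFamily ρ (l • X + (1 - l) • Y) (fun t => l • FX t + (1 - l) • FY t) := by
  obtain ⟨a1, ⟨MX, a2⟩, a3, a4⟩ := hFX
  obtain ⟨b1, ⟨MY, b2⟩, b3, b4⟩ := hFY
  refine ⟨(a1.const_smul l).add (b1.const_smul (1 - l)),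
    ⟨|l| * MX + |1 - l| * MY, fun t ht => ?_⟩, fun t h0 h1 => ?_, fun t h0 h1 => ?_⟩
  · refine (norm_add_le _ _).trans ?_
    rw [norm_smul, norm_smul, Real.norm_eq_abs, Real.norm_eq_abs]
    gcongr
    · exact a2 t ht
    · exact b2 t ht
  · simp only [add_mul, mul_add, smul_mul_assoc, mul_smul_comm, a3 t h0 h1, b3 t h0 h1]
  · simp only [add_mul, mul_add, smul_mul_assoc, mul_smul_comm, a4 t h0 h1, b4 t h0 h1]

/-- Let `ρ = exp (-H₀)` be a finite faithful weight and let `X`, `Y` be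
bounded (self-adjoint) operators satisfying the Araki condition for `ρ` (with Araki
families `FX`, `FY` bounded by `MX = ‖X‖_A`, `MY = ‖Y‖_A`), and let `λ ∈ (0,1)`.  Then
`λ X + (1-λ) Y` satisfies the Araki condition for `ρ`, and if the weights
`ρ_X = exp (-(H₀+X))` and `ρ_Y = exp (-(H₀+Y))` are both nearby `ρ`, then the weight
`ρ_{λX+(1-λ)Y} = exp (-(H₀ + λX + (1-λ)Y))` is also nearby `ρ`, with constant
`exp (λ ‖X‖_A + (1-λ) ‖Y‖_A)`.  Hence the weights nearby `ρ` carry the canonical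
`(+1)`-affine structure via convex combination of the relative Hamiltonians. -/
theorem statement14 {ι : Type*} (b : HilbertBasis ι ℂ H) (ρ : H →L[ℂ] H)
    (hρ : IsFiniteWeight b ρ) (X Y : H →L[ℂ] H)
    (hX : IsSelfAdjoint X) (hY : IsSelfAdjoint Y)
    (FX FY : ℂ → H →L[ℂ] H) (hFX : IsArakiFamily ρ X FX) (hFY : IsArakiFamily ρ Y FY)
    (MX MY : ℝ)
    (hMX : ∀ t ∈ ball (0:ℂ) (1/2), ‖FX t‖ ≤ MX)
    (hMY : ∀ t ∈ ball (0:ℂ) (1/2), ‖FY t‖ ≤ MY)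
    (l : ℝ) (hl : l ∈ Set.Ioo (0:ℝ) 1) :
    SatisfiesAraki ρ (l • X + (1 - l) • Y) ∧
    (∀ σX σY σZ : H →L[ℂ] H,
      IsFiniteWeight b σX → IsFiniteWeight b σY → IsFiniteWeight b σZ →
      IsExpPerturbed ρ σX X → IsExpPerturbed ρ σY Y →
      IsNearby σX ρ → IsNearby σY ρ →
      IsExpPerturbed ρ σZ (l • X + (1 - l) • Y) →
      (Real.exp (l * MX + (1 - l) * MY))⁻¹ • ρ ≤ σZ ∧
      σZ ≤ Real.exp (l * MX + (1 - l) * MY) • ρ) := by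
  have hA := araki_convex ρ X Y FX FY hFX hFY l
  refine ⟨⟨_, hA⟩, ?_⟩
  intro σX σY σZ _ _ hσZ _ _ _ _ hZ
  have hZs : IsSelfAdjoint (l • X + (1 - l) • Y) :=
    (IsSelfAdjoint.smul (IsSelfAdjoint.all l) hX).add
      (IsSelfAdjoint.smul (IsSelfAdjoint.all (1 - l)) hY)
  have hbound : ∀ t ∈ ball (0:ℂ) (1/2),
      ‖l • FX t + (1 - l) • FY t‖ ≤ l * MX + (1 - l) * MY := by
    intro t ht
    refine (norm_add_le _ _).trans ?_
    rw [norm_smul, norm_smul, Real.norm_of_nonneg hl.1.le,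
      Real.norm_of_nonneg (by linarith [hl.2] : 0 ≤ 1 - l)]
    exact add_le_add (mul_le_mul_of_nonneg_left (hMX t ht) hl.1.le)
      (mul_le_mul_of_nonneg_left (hMY t ht) (by linarith [hl.2]))
  have hc := core_bounds ρ σZ _ hρ.1 hσZ.1 hZs hZ _ hA _ hbound
  have u1 := le_limit σZ ρ hσZ.1 hρ.1 _ (fun T h0 h1 => (hc T h0 h1).1)
  have u2 := le_limit ρ σZ hρ.1 hσZ.1 _ (fun T h0 h1 => (hc T h0 h1).2)
  refine ⟨?_, u1⟩
  have hpos := Real.exp_pos (l * MX + (1 - l) * MY)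
  have u3 := smul_le_smul_of_nonneg_left u2 (inv_nonneg.2 hpos.le)
  rwa [inv_smul_smul₀ hpos.ne'] at u3
end
end
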